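/- arXiv:0705.0758 — 6 statements merged into one kernel-verified Lean document; each statement's English description precedes it below -/
import Mathlib

section
/- Let g be an invertible symmetric 3×3 real matrix with inverse g⁻¹, and let R : Fin 3 → Fin 3 → Fin 3 → Fin 3 → ℝ satisfy the Riemann symmetries: R a b c d = -R b a c d = -R a b d c = R c d a b for all indices, and the first Bianchi identity R a b c d + R a c d b + R a d b c = 0. Define the Ricci tensor Ric b d = Σ_{a,c} (g⁻¹) a c * R a b c d, the curvature scalar Λ = Σ_{b,d} (g⁻¹) b d * Ric b d, and the traceless Ricci tensor S a b = Ric a b - (1/3) * Λ * g a b. Then for all indices a, b, c, d: R a b c d = g a c * S b d - g a d * S b c + g b d * S a c - g b c * S a d - (1/6) * (g a d * g b c - g a c * g b d) * Λ. (In three dimensions the Weyl tensor vanishes identically and the curvature is completely determined by the Ricci tensor and the curvature scalar.) -/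
/-!
A tensor that is skew in each of two pairs of indices drawn from three values has no trace-free
part: two pairs of distinct indices always share an index, so every component is, up to sign,
some `T a b a d`. For `b ≠ d` this is the only term of the contraction over `a`, and the three
components `T a b a b` vanish because any two of them sum to zero. Raising the last two indices
transfers this from the Kronecker delta to an arbitrary metric `g`. It remains to apply it to
the difference between `R` and the Kulkarni–Nomizu product of `g` with the Schouten tensor
`Ric - (Λ / 4) g`, a product whose Ricci contraction is `Ric`.
-/

section ThreeDimensionalCurvature

variable {ι K : Type*}

/-- A four-index array that is skew in its first and in its last pair of indices, such as the
components of a curvature tensor with all indices lowered. -/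
structure IsSkewInPairs [Neg K] (T : ι → ι → ι → ι → K) : Prop where
  fst : ∀ a b c d, T a b c d = -T b a c d
  snd : ∀ a b c d, T a b c d = -T a b d c

/-- The Kulkarni–Nomizu product of two bilinear forms, which builds curvature-like tensors from
them; the sign is the one for which a space of positive constant curvature has `R` a positive
multiple of `kulkarniNomizu g g`. -/
def kulkarniNomizu [CommRing K] (g h : Matrix ι ι K) (a b c d : ι) : K :=
  g a c * h b d - g a d * h b c + g b d * h a c - g b c * h a d

theorem isSkewInPairs_kulkarniNomizu [CommRing K] (g h : Matrix ι ι K) :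
    IsSkewInPairs (kulkarniNomizu g h) where
  fst a b c d := by simp only [kulkarniNomizu]; ring
  snd a b c d := by simp only [kulkarniNomizu]; ring

namespace IsSkewInPairs

theorem sub [AddCommGroup K] {T U : ι → ι → ι → ι → K} (hT : IsSkewInPairs T)
    (hU : IsSkewInPairs U) : IsSkewInPairs (T - U) where
  fst a b c d := by simp only [Pi.sub_apply, hT.fst a b, hU.fst a b]; abel
  snd a b c d := by simp only [Pi.sub_apply, hT.snd a b c, hU.snd a b c]; abel

section Ring

variable [Ring K] [NoZeroDivisors K] [NeZero (2 : K)] {T : ι → ι → ι → ι → K}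

theorem apply_self_left (hT : IsSkewInPairs T) (a c d : ι) : T a a c d = 0 := by
  have h : 2 * T a a c d = 0 := by rw [two_mul, ← eq_neg_iff_add_eq_zero]; exact hT.fst a a c d
  exact (mul_eq_zero.mp h).resolve_left two_ne_zero

theorem apply_self_right (hT : IsSkewInPairs T) (a b c : ι) : T a b c c = 0 := by
  have h : 2 * T a b c c = 0 := by rw [two_mul, ← eq_neg_iff_add_eq_zero]; exact hT.snd a b c c
  exact (mul_eq_zero.mp h).resolve_left two_ne_zero

end Ring

end IsSkewInPairs

section CardThree

variable [Fintype ι] {a b c : ι}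

theorem sum_eq_of_card_three {M : Type*} [AddCommMonoid M] (hι : Fintype.card ι = 3) (hab : a ≠ b)
    (hac : a ≠ c) (hbc : b ≠ c) (f : ι → M) : ∑ i, f i = f a + f b + f c := by
  classical
  have huniv : ({a, b, c} : Finset ι) = Finset.univ := Finset.eq_univ_of_card _ <| by
    rw [Finset.card_eq_three.mpr ⟨a, b, c, hab, hac, hbc, rfl⟩, hι]
  rw [← huniv, Finset.sum_insert (by simp [hab, hac]), Finset.sum_pair hbc, add_assoc]

theorem pairs_meet_of_card_le_three {d : ι} (hι : Fintype.card ι ≤ 3) (hab : a ≠ b)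
    (hcd : c ≠ d) : a = c ∨ a = d ∨ b = c ∨ b = d := by
  classical
  by_contra! ⟨hac, had, hbc, hbd⟩
  have hcard : ({a, b, c, d} : Finset ι).card = 4 := by
    simp [hab, hac, had, hbc, hbd, hcd]
  have := Finset.card_le_univ ({a, b, c, d} : Finset ι)
  omega

end CardThree

namespace IsSkewInPairs

section TraceFree

variable [Fintype ι] [Ring K] [NoZeroDivisors K] [NeZero (2 : K)] {T : ι → ι → ι → ι → K}

theorem offDiag_eq_zero_of_trace_eq_zero (hT : IsSkewInPairs T) (hι : Fintype.card ι = 3)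
    (htr : ∀ b d, ∑ a, T a b a d = 0) {a b d : ι} (hbd : b ≠ d) : T a b a d = 0 := by
  rcases eq_or_ne a b with rfl | hab
  · exact hT.apply_self_left a a d
  rcases eq_or_ne a d with rfl | had
  · exact hT.apply_self_right a b a
  simpa [sum_eq_of_card_three hι hab had hbd, hT.apply_self_left, hT.apply_self_right]
    using htr b d

theorem sectional_eq_zero_of_trace_eq_zero (hT : IsSkewInPairs T) (hι : Fintype.card ι = 3)
    (htr : ∀ b d, ∑ a, T a b a d = 0) (a b : ι) : T a b a b = 0 := by
  rcases eq_or_ne a b with rfl | hab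
  · exact hT.apply_self_left a a a
  obtain ⟨c, hca, hcb⟩ := Cardinal.exists_ne_ne_of_three_le (by simp [hι]) a b
  have hswap (x y : ι) : T x y x y = T y x y x := by rw [hT.fst, hT.snd, neg_neg]
  have hsum (y : ι) : T a y a y + T b y b y + T c y c y = 0 := by
    rw [← htr y y, sum_eq_of_card_three hι hab hca.symm hcb.symm]
  have ha : T a b a b + T a c a c = 0 := by
    simpa [hT.apply_self_left, hswap b a, hswap c a] using hsum a
  have hb : T a b a b + T b c b c = 0 := by
    simpa [hT.apply_self_left, hswap c b] using hsum b
  have hc : T a c a c + T b c b c = 0 := by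
    simpa [hT.apply_self_left] using hsum c
  have htwo : 2 * T a b a b = 0 := by
    calc 2 * T a b a b
        = (T a b a b + T a c a c) + (T a b a b + T b c b c) - (T a c a c + T b c b c) := by
          rw [two_mul]; abel
      _ = 0 := by rw [ha, hb, hc, add_zero, sub_zero]
  exact (mul_eq_zero.mp htwo).resolve_left two_ne_zero

theorem eq_zero_of_trace_eq_zero (hT : IsSkewInPairs T) (hι : Fintype.card ι = 3)
    (htr : ∀ b d, ∑ a, T a b a d = 0) : T = 0 := by
  have hshared (a b d : ι) : T a b a d = 0 := by
    rcases eq_or_ne b d with rfl | hbd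
    · exact hT.sectional_eq_zero_of_trace_eq_zero hι htr a b
    · exact hT.offDiag_eq_zero_of_trace_eq_zero hι htr hbd
  ext a b c d
  change T a b c d = 0
  rcases eq_or_ne a b with rfl | hab
  · exact hT.apply_self_left a c d
  rcases eq_or_ne c d with rfl | hcd
  · exact hT.apply_self_right a b c
  rcases pairs_meet_of_card_le_three hι.le hab hcd with rfl | rfl | rfl | rfl
  · exact hshared a b d
  · rw [hT.snd, hshared, neg_zero]
  · rw [hT.fst, hshared, neg_zero]
  · rw [hT.fst, hT.snd, hshared, neg_zero, neg_zero]

end TraceFree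

end IsSkewInPairs

section Contraction

variable [Fintype ι] [CommRing K] {g ginv : Matrix ι ι K} {T : ι → ι → ι → ι → K}

/-- The Ricci contraction of `T`, over its first and third indices by means of the inverse metric
`ginv`. -/
def ricciContraction (ginv : Matrix ι ι K) (T : ι → ι → ι → ι → K) : Matrix ι ι K :=
  Matrix.of fun b d => ∑ a, ∑ c, ginv a c * T a b c d

/-- The trace of a bilinear form `h` with respect to a metric with inverse `ginv`. -/
def metricTrace (ginv h : Matrix ι ι K) : K := ∑ b, ∑ d, ginv b d * h b d

theorem ricciContraction_sub (ginv : Matrix ι ι K) (T U : ι → ι → ι → ι → K) :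
    ricciContraction ginv (T - U) = ricciContraction ginv T - ricciContraction ginv U := by
  ext b d
  simp only [ricciContraction, Matrix.of_apply, Matrix.sub_apply, Pi.sub_apply, mul_sub,
    Finset.sum_sub_distrib]

theorem metricTrace_sub_smul (ginv h k : Matrix ι ι K) (s : K) :
    metricTrace ginv (h - s • k) = metricTrace ginv h - s * metricTrace ginv k := by
  simp only [metricTrace, Matrix.sub_apply, Matrix.smul_apply, smul_eq_mul, mul_sub,
    Finset.sum_sub_distrib, Finset.mul_sum, mul_left_comm]

/-- `T` with its last two indices raised by `ginv`. -/
def raiseLastPair (ginv : Matrix ι ι K) (T : ι → ι → ι → ι → K) (a b : ι) : Matrix ι ι K :=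
  ginv * Matrix.of (T a b) * ginv.transpose

theorem isSkewInPairs_raiseLastPair (hT : IsSkewInPairs T) (ginv : Matrix ι ι K) :
    IsSkewInPairs (raiseLastPair ginv T) where
  fst a b c d := by
    have h : Matrix.of (T a b) = -Matrix.of (T b a) := Matrix.ext (hT.fst a b)
    simp only [raiseLastPair, h, Matrix.mul_neg, Matrix.neg_mul, Matrix.neg_apply]
  snd a b c d := by
    have h : (Matrix.of (T a b)).transpose = -Matrix.of (T a b) :=
      Matrix.ext fun i j => hT.snd a b j i
    rw [← Matrix.transpose_apply (raiseLastPair ginv T a b), ← Matrix.neg_apply]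
    simp only [raiseLastPair, Matrix.transpose_mul, Matrix.transpose_transpose, h,
      Matrix.mul_assoc, Matrix.mul_neg, Matrix.neg_mul]

theorem sum_raiseLastPair (ginv : Matrix ι ι K) (T : ι → ι → ι → ι → K) (b d : ι) :
    ∑ a, raiseLastPair ginv T a b a d = (ricciContraction ginv T * ginv.transpose) b d := by
  simp only [raiseLastPair, ricciContraction, Matrix.mul_apply, Matrix.of_apply, Finset.sum_mul]
  exact Finset.sum_comm

variable [DecidableEq ι]

theorem metricTrace_self (hg : g.IsSymm) (hginv : g * ginv = 1) :
    metricTrace ginv g = Fintype.card ι := by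
  calc metricTrace ginv g = (ginv * g.transpose).trace := by
        simp only [metricTrace, Matrix.trace, Matrix.diag_apply, Matrix.mul_apply,
          Matrix.transpose_apply]
    _ = Fintype.card ι := by rw [hg.eq, Matrix.trace_mul_comm, hginv, Matrix.trace_one]

theorem eq_zero_of_raiseLastPair_eq_zero (hginv : g * ginv = 1) (h : raiseLastPair ginv T = 0) :
    T = 0 := by
  funext a b
  have hab : Matrix.of (T a b) = 0 := by
    calc Matrix.of (T a b)
        = g * ginv * Matrix.of (T a b) * (g * ginv).transpose := by
          rw [hginv, Matrix.transpose_one, Matrix.one_mul, Matrix.mul_one]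
      _ = g * raiseLastPair ginv T a b * g.transpose := by
          simp only [raiseLastPair, Matrix.transpose_mul, Matrix.mul_assoc]
      _ = 0 := by simp only [h, Pi.zero_apply, Matrix.mul_zero, Matrix.zero_mul]
  exact hab

theorem ricciContraction_kulkarniNomizu (hg : g.IsSymm) (hginv : g * ginv = 1)
    (h : Matrix ι ι K) :
    ricciContraction ginv (kulkarniNomizu g h) =
      ((Fintype.card ι : K) - 2) • h + metricTrace ginv h • g := by
  have hsymm : ginv.transpose * g = 1 := by
    rw [← hg.eq, ← Matrix.transpose_mul, hginv, Matrix.transpose_one]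
  have hright (a d : ι) : ∑ c, ginv a c * g c d = (1 : Matrix ι ι K) a d := by
    rw [← mul_eq_one_comm.mp hginv, Matrix.mul_apply]
  have hleft (c d : ι) : ∑ a, ginv a c * g a d = (1 : Matrix ι ι K) c d := by
    rw [← hsymm]; rfl
  ext b d
  have hac : ∑ a, ∑ c, ginv a c * (g a c * h b d) = Fintype.card ι * h b d := by
    simp only [← metricTrace_self hg hginv, metricTrace, Finset.sum_mul, mul_assoc]
  have had : ∑ a, ∑ c, ginv a c * (g a d * h b c) = h b d := by
    rw [Finset.sum_comm]
    simp only [← mul_assoc, ← Finset.sum_mul, hleft, Matrix.one_apply, ite_mul, one_mul, zero_mul,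
      Finset.sum_ite_eq', Finset.mem_univ, if_true]
  have hbd : ∑ a, ∑ c, ginv a c * (g b d * h a c) = metricTrace ginv h * g b d := by
    simp only [metricTrace, Finset.sum_mul, mul_assoc, mul_comm (g b d)]
  have hbc : ∑ a, ∑ c, ginv a c * (g b c * h a d) = h b d := by
    simp only [hg.apply _ b, ← mul_assoc, ← Finset.sum_mul, hright, Matrix.one_apply, ite_mul,
      one_mul, zero_mul, Finset.sum_ite_eq', Finset.mem_univ, if_true]
  simp only [ricciContraction, kulkarniNomizu, Matrix.of_apply, mul_sub, mul_add,
    Finset.sum_sub_distrib, Finset.sum_add_distrib, hac, had, hbd, hbc, Matrix.add_apply,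
    Matrix.smul_apply, smul_eq_mul]
  ring

theorem IsSkewInPairs.eq_zero_of_ricciContraction_eq_zero [NoZeroDivisors K] [NeZero (2 : K)]
    (hT : IsSkewInPairs T) (hι : Fintype.card ι = 3) (hginv : g * ginv = 1)
    (hRic : ricciContraction ginv T = 0) : T = 0 := by
  refine eq_zero_of_raiseLastPair_eq_zero hginv
    ((isSkewInPairs_raiseLastPair hT ginv).eq_zero_of_trace_eq_zero hι fun b d => ?_)
  rw [sum_raiseLastPair, hRic, Matrix.zero_mul, Matrix.zero_apply]

end Contraction

theorem IsSkewInPairs.eq_kulkarniNomizu_schouten [Field K] [NeZero (2 : K)] [Fintype ι]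
    [DecidableEq ι] {R : ι → ι → ι → ι → K} {g ginv Ric : Matrix ι ι K} {Λ : K}
    (hR : IsSkewInPairs R) (hι : Fintype.card ι = 3) (hg : g.IsSymm) (hginv : g * ginv = 1)
    (hRic : Ric = ricciContraction ginv R) (hΛ : Λ = metricTrace ginv Ric) :
    R = kulkarniNomizu g (Ric - (Λ / 4) • g) := by
  have hfour : (4 : K) ≠ 0 := by
    rw [show (4 : K) = 2 * 2 by norm_num]; exact mul_ne_zero two_ne_zero two_ne_zero
  have htrace : metricTrace ginv (Ric - (Λ / 4) • g) = Λ / 4 := by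
    rw [metricTrace_sub_smul, ← hΛ, metricTrace_self hg hginv, hι]
    field_simp
    norm_num
  refine sub_eq_zero.mp <|
    (hR.sub (isSkewInPairs_kulkarniNomizu g _)).eq_zero_of_ricciContraction_eq_zero hι hginv ?_
  rw [ricciContraction_sub, ricciContraction_kulkarniNomizu hg hginv, htrace, ← hRic, hι,
    show ((3 : ℕ) : K) - 2 = 1 by norm_num, one_smul, sub_add_cancel, sub_self]

theorem riemann_from_ricci_in_three_dimensions_general [Field K] [NeZero (2 : K)] [NeZero (3 : K)]
    [Fintype ι] [DecidableEq ι] (hι : Fintype.card ι = 3) (g ginv : Matrix ι ι K)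
    (hg : g.IsSymm) (hginv : g * ginv = 1) (R : ι → ι → ι → ι → K) (hR : IsSkewInPairs R)
    (Ric : ι → ι → K) (hRic : ∀ b d, Ric b d = ∑ a, ∑ c, ginv a c * R a b c d)
    (Λ : K) (hΛ : Λ = ∑ b, ∑ d, ginv b d * Ric b d)
    (S : ι → ι → K) (hS : ∀ a b, S a b = Ric a b - (1 / 3) * Λ * g a b) (a b c d : ι) :
    R a b c d =
      g a c * S b d - g a d * S b c + g b d * S a c - g b c * S a d
        - (1 / 6) * (g a d * g b c - g a c * g b d) * Λ := by
  have htwo : (2 : K) ≠ 0 := two_ne_zero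
  have hthree : (3 : K) ≠ 0 := three_ne_zero
  have hschouten : Λ / 4 = Λ / 3 - Λ / 12 := by
    rw [show (4 : K) = 2 * 2 by norm_num, show (12 : K) = 2 * 2 * 3 by norm_num]
    field_simp
    norm_num
  have hsixth : (1 / 6 : K) = 2 * (1 / 12) := by
    rw [show (6 : K) = 2 * 3 by norm_num, show (12 : K) = 2 * 2 * 3 by norm_num]
    field_simp
  rw [hR.eq_kulkarniNomizu_schouten hι hg hginv (Ric := Matrix.of Ric) (Matrix.ext hRic) hΛ]
  simp only [kulkarniNomizu, Matrix.sub_apply, Matrix.smul_apply, Matrix.of_apply, smul_eq_mul, hS,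
    hschouten, hsixth]
  ring

end ThreeDimensionalCurvature

open Finset in
/-- In three dimensions the Riemann curvature tensor is completely determined by
the traceless Ricci tensor and the curvature scalar. -/
theorem riemann_from_ricci_in_three_dimensions
    (g ginv : Matrix (Fin 3) (Fin 3) ℝ)
    (hgsymm : g.IsSymm)
    (hginv : g * ginv = 1) (hinvg : ginv * g = 1)
    (R : Fin 3 → Fin 3 → Fin 3 → Fin 3 → ℝ)
    (hskew1 : ∀ a b c d, R a b c d = -R b a c d)
    (hskew2 : ∀ a b c d, R a b c d = -R a b d c)
    (hpair : ∀ a b c d, R a b c d = R c d a b)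
    (hbianchi : ∀ a b c d, R a b c d + R a c d b + R a d b c = 0)
    (Ric : Fin 3 → Fin 3 → ℝ)
    (hRic : ∀ b d, Ric b d = ∑ a : Fin 3, ∑ c : Fin 3, ginv a c * R a b c d)
    (Λ : ℝ)
    (hΛ : Λ = ∑ b : Fin 3, ∑ d : Fin 3, ginv b d * Ric b d)
    (S : Fin 3 → Fin 3 → ℝ)
    (hS : ∀ a b, S a b = Ric a b - (1 / 3) * Λ * g a b) :
    ∀ a b c d,
      R a b c d =
        g a c * S b d - g a d * S b c + g b d * S a c - g b c * S a d
          - (1 / 6) * (g a d * g b c - g a c * g b d) * Λ :=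
  riemann_from_ricci_in_three_dimensions_general (Fintype.card_fin 3) g ginv hgsymm hginv R
    ⟨hskew1, hskew2⟩ Ric hRic Λ hΛ S hS
end

section
/- Let V be a 3-dimensional real vector space with a symmetric bilinear form g, and let (k, n, m) be a null triad spanning V (g(k,n) = -1, g(m,m) = 1, g(k,k) = g(n,n) = g(k,m) = g(n,m) = 0). Let T be the Segre type [3] canonical form T(u,w) = α·g(u,w) + μ·(g(k,u)g(m,w) + g(m,u)g(k,w)) with μ ≠ 0. Then every eigenvector of T relative to g is a nonzero scalar multiple of the null vector k, and its eigenvalue is α. (The Segre type [3] tensor has exactly one eigendirection, which is null.) -/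
/-!
Raising an index with `g` turns `T` into the endomorphism `α + μ N`, where
`N v = g(k,v) m + g(m,v) k`. Since `N` sends `n ↦ -m`, `m ↦ k`, `k ↦ 0`, it is a single nilpotent
Jordan block of size three. Hence the only eigenvalue is `α`, and its eigenvectors are the nonzero
elements of `ker N`, the line spanned by `k`.
-/

section BilinForm

variable {R V : Type*} [CommRing R] [AddCommGroup V] [Module R V] {g : LinearMap.BilinForm R V}

theorem isTorsionFree_of_separatingLeft (hg : g.SeparatingLeft) : Module.IsTorsionFree R V :=
  (LinearMap.ker_eq_bot.mp (LinearMap.separatingLeft_iff_ker_eq_bot.mp hg)).moduleIsTorsionFree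
    g g.map_smul

/-- The symmetrized product `x ⊙ y` of two vectors with one index lowered by `g`, as an
endomorphism; `symmProd g k m` is the nilpotent part of the Segre type [3] form. No factor `1/2`
is included, so that `R` may have any characteristic. -/
def symmProd (g : LinearMap.BilinForm R V) (x y : V) : Module.End R V :=
  (g x).smulRight y + (g y).smulRight x

theorem symmProd_apply (x y v : V) : symmProd g x y v = g x v • y + g y v • x := rfl

theorem apply_symmProd (x y v w : V) :
    g (symmProd g x y v) w = g x v * g y w + g y v * g x w := by
  simp [symmProd_apply]

theorem symmProd_apply_left {x y : V} (hxx : g x x = 0) (hyx : g y x = 0) :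
    symmProd g x y x = 0 := by
  simp [symmProd_apply, hxx, hyx]

theorem symmProd_apply_right {x y : V} (hxy : g x y = 0) :
    symmProd g x y y = g y y • x := by
  simp [symmProd_apply, hxy]

theorem symmProd_pow_three {x y : V} (hxx : g x x = 0) (hxy : g x y = 0) (hyx : g y x = 0) :
    symmProd g x y ^ 3 = 0 := by
  ext v
  simp [pow_succ, symmProd_apply x y v, symmProd_apply_left hxx hyx, symmProd_apply_right hxy]

/-- A null triad `(k, n, m)`: two null vectors normalized by `g k n = -1` and a unit vector
orthogonal to both. Symmetry of `g` and spanning are kept as separate hypotheses, so each product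
is recorded in one order only. -/
structure IsNullTriad (g : LinearMap.BilinForm R V) (k n m : V) : Prop where
  left_right : g k n = -1
  unit_unit : g m m = 1
  left_left : g k k = 0
  right_right : g n n = 0
  left_unit : g k m = 0
  right_unit : g n m = 0

namespace IsNullTriad

variable {k n m : V}

theorem eq_expansion (h : IsNullTriad g k n m) (hg : g.IsSymm)
    (hspan : Submodule.span R {k, n, m} = ⊤) (v : V) :
    v = -(g n v • k) - g k v • n + g m v • m := by
  obtain ⟨a, b, d, rfl⟩ := Submodule.mem_span_triple.mp (hspan ▸ Submodule.mem_top : v ∈ _)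
  simp [h.left_right, h.unit_unit, h.left_left, h.right_right, h.left_unit, h.right_unit,
    hg.eq n k, hg.eq m k, hg.eq m n]

theorem separatingLeft (h : IsNullTriad g k n m) (hg : g.IsSymm)
    (hspan : Submodule.span R {k, n, m} = ⊤) : g.SeparatingLeft := by
  intro v hv
  rw [h.eq_expansion hg hspan v]
  simp [hg.eq _ v, hv]

theorem ker_symmProd (h : IsNullTriad g k n m) (hg : g.IsSymm)
    (hspan : Submodule.span R {k, n, m} = ⊤) :
    LinearMap.ker (symmProd g k m) = Submodule.span R {k} := by
  have hmk : g m k = 0 := by rw [hg.eq, h.left_unit]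
  apply le_antisymm
  · intro v hv
    have hNv : ∀ w, g k v * g m w + g m v * g k w = 0 := fun w => by
      rw [← apply_symmProd, LinearMap.mem_ker.mp hv, map_zero, LinearMap.zero_apply]
    have hkv : g k v = 0 := by simpa [h.unit_unit, h.left_unit] using hNv m
    have hmv : g m v = 0 := by simpa [hkv, h.left_right] using hNv n
    refine Submodule.mem_span_singleton.mpr ⟨-g n v, ?_⟩
    simpa [hkv, hmv] using (h.eq_expansion hg hspan v).symm
  · rw [Submodule.span_singleton_le_iff_mem, LinearMap.mem_ker]
    exact symmProd_apply_left h.left_left hmk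

theorem isNilpotent_symmProd (h : IsNullTriad g k n m) (hg : g.IsSymm) :
    IsNilpotent (symmProd g k m) :=
  ⟨3, symmProd_pow_three h.left_left h.left_unit (by rw [hg.eq, h.left_unit])⟩

theorem eq_zero_and_mem_span_of_hasEigenvector [IsDomain R] (h : IsNullTriad g k n m)
    (hg : g.IsSymm) (hspan : Submodule.span R {k, n, m} = ⊤) {μ c : R} (hμ : μ ≠ 0) {v : V}
    (hv : (μ • symmProd g k m).HasEigenvector c v) :
    c = 0 ∧ v ∈ Submodule.span R {k} := by
  have := isTorsionFree_of_separatingLeft (h.separatingLeft hg hspan)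
  have hc : c = 0 :=
    ((Module.End.hasEigenvalue_of_hasEigenvector hv).isNilpotent_of_isNilpotent
      ((h.isNilpotent_symmProd hg).smul μ)).eq_zero
  refine ⟨hc, ?_⟩
  have hμN : μ • symmProd g k m v = 0 := by simpa [hc] using hv.apply_eq_smul
  rw [← h.ker_symmProd hg hspan]
  exact (smul_eq_zero.mp hμN).resolve_left hμ

end IsNullTriad

theorem segre_type_three_unique_null_eigendirection_general [IsDomain R] {k n m : V}
    (h : IsNullTriad g k n m) (hg : g.IsSymm) (hspan : Submodule.span R {k, n, m} = ⊤)
    {α μ : R} (hμ : μ ≠ 0) {T : LinearMap.BilinForm R V}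
    (hT : ∀ u w : V, T u w = α * g u w + μ * (g k u * g m w + g m u * g k w))
    {v : V} {c : R} (hv : v ≠ 0) (hev : ∀ u : V, T v u = c * g v u) :
    (∃ s : R, s ≠ 0 ∧ v = s • k) ∧ c = α := by
  have hN : (μ • symmProd g k m) v = (c - α) • v := by
    rw [← sub_eq_zero]
    refine h.separatingLeft hg hspan _ fun u => ?_
    have hu : α * g v u + μ * g (symmProd g k m v) u = c * g v u := by
      rw [apply_symmProd, ← hT, hev]
    simp only [map_sub, map_smul, LinearMap.sub_apply, LinearMap.smul_apply, smul_eq_mul]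
    linear_combination hu
  obtain ⟨hc, hvk⟩ := h.eq_zero_and_mem_span_of_hasEigenvector hg hspan hμ
    (Module.End.hasEigenvector_iff.mpr ⟨Module.End.mem_eigenspace_iff.mpr hN, hv⟩)
  obtain ⟨s, rfl⟩ := Submodule.mem_span_singleton.mp hvk
  exact ⟨⟨s, left_ne_zero_of_smul hv, rfl⟩, sub_eq_zero.mp hc⟩

end BilinForm

/-- The Segre type [3] canonical tensor has exactly one eigendirection, which is
the null direction `k`, with eigenvalue `α`. -/
theorem segre_type_three_unique_null_eigendirection
    {V : Type*} [AddCommGroup V] [Module ℝ V]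
    (g : LinearMap.BilinForm ℝ V) (hgsymm : ∀ u w : V, g u w = g w u)
    (k n m : V)
    (hkn : g k n = -1) (hmm : g m m = 1)
    (hkk : g k k = 0) (hnn : g n n = 0) (hkm : g k m = 0) (hnm : g n m = 0)
    (hspan : Submodule.span ℝ {k, n, m} = ⊤)
    (α μ : ℝ) (hμ : μ ≠ 0)
    (T : LinearMap.BilinForm ℝ V)
    (hT : ∀ u w : V,
      T u w = α * g u w + μ * (g k u * g m w + g m u * g k w)) :
    ∀ v : V, ∀ c : ℝ, v ≠ 0 → (∀ u : V, T v u = c * g v u) →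
      (∃ s : ℝ, s ≠ 0 ∧ v = s • k) ∧ c = α := by
  intro v c hv hev
  exact segre_type_three_unique_null_eigendirection_general ⟨hkn, hmm, hkk, hnn, hkm, hnm⟩
    ⟨hgsymm⟩ hspan hμ hT hv hev
end

section
/- Let V be a 3-dimensional real vector space with a symmetric bilinear form g, and let (k, n, m) be a null triad spanning V (g(k,n) = -1, g(m,m) = 1, g(k,k) = g(n,n) = g(k,m) = g(n,m) = 0). Let T be the Segre type [1zz̄] canonical form T(u,w) = -α·(g(k,u)g(n,w) + g(n,u)g(k,w)) - β·(g(k,u)g(k,w) - g(n,u)g(n,w)) + γ·g(m,u)g(m,w) with β ≠ 0. Then m is an eigenvector of T relative to g with eigenvalue γ, and every eigenvector of T relative to g is a nonzero scalar multiple of m. (For β ≠ 0 the pair of complex-conjugate eigenvalues α ± iβ admits no real eigenvectors, so the only real eigendirection is the spacelike vector m.) -/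
/-!
For `v` a relative eigenvector of the canonical form, pairing the eigenvalue equation with `k` and
with `n` says that `(g k v, g n v)` is an eigenvector, or zero, of the matrix `!![α, -β; β, α]`,
which is multiplication by `α + iβ`. Since `β ≠ 0` and `-1` is not a square, this matrix has no
eigenvector over the base field. So `v` is orthogonal to `k` and `n`, and the only such vectors in
the span of the triad are the multiples of `m`.
-/

section SumOfTwoSquares

variable {K : Type*} [Field K]

theorem eq_zero_and_eq_zero_of_sq_add_sq_eq_zero (hK : ¬IsSquare (-1 : K)) {x y : K}
    (h : x ^ 2 + y ^ 2 = 0) : x = 0 ∧ y = 0 := by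
  have hy : y = 0 := by
    by_contra hy
    refine hK ⟨x / y, ?_⟩
    field_simp
    linear_combination -h
  exact ⟨by simpa [hy] using h, hy⟩

theorem eq_zero_and_eq_zero_of_rotation_scaling_eigenvector (hK : ¬IsSquare (-1 : K))
    {α β c x y : K} (hβ : β ≠ 0) (hx : α * x - β * y = c * x) (hy : β * x + α * y = c * y) :
    x = 0 ∧ y = 0 := by
  have hβxy : β * (x ^ 2 + y ^ 2) = 0 := by linear_combination x * hy - y * hx
  exact eq_zero_and_eq_zero_of_sq_add_sq_eq_zero hK ((mul_eq_zero_iff_left hβ).mp hβxy)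

end SumOfTwoSquares

section NullTriad

variable {R V : Type*} [CommRing R] [AddCommGroup V] [Module R V]

/-- A null triad `(k, n, m)` of a bilinear form `g`: two null vectors normalized by `g k n = -1`,
and a unit spacelike vector orthogonal to both. Only one order of each mixed product is prescribed,
since `g` is meant to be symmetric. -/
structure IsNullTriad_s9 (g : LinearMap.BilinForm R V) (k n m : V) : Prop where
  apply_k_n : g k n = -1
  apply_m_m : g m m = 1
  apply_k_k : g k k = 0
  apply_n_n : g n n = 0
  apply_k_m : g k m = 0
  apply_n_m : g n m = 0

/-- The vector `v` is an eigenvector of the bilinear form `T` relative to the bilinear form `g`,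
with eigenvalue `c`. -/
def IsRelativeEigenvector (T g : LinearMap.BilinForm R V) (c : R) (v : V) : Prop :=
  v ≠ 0 ∧ ∀ u : V, T v u = c * g v u

open LinearMap.BilinForm (linMulLin) in
/-- The canonical form of Segre type [1zz̄] built on the vectors `k`, `n`, `m`, with complex
eigenvalues `α ± iβ` and real eigenvalue `γ`. -/
def segreOneZZbar (g : LinearMap.BilinForm R V) (k n m : V) (α β γ : R) :
    LinearMap.BilinForm R V :=
  -α • (linMulLin (g k) (g n) + linMulLin (g n) (g k)) -
    β • (linMulLin (g k) (g k) - linMulLin (g n) (g n)) + γ • linMulLin (g m) (g m)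

theorem segreOneZZbar_apply (g : LinearMap.BilinForm R V) (k n m : V) (α β γ : R) (u w : V) :
    segreOneZZbar g k n m α β γ u w =
      -α * (g k u * g n w + g n u * g k w) - β * (g k u * g k w - g n u * g n w) +
        γ * (g m u * g m w) :=
  rfl

namespace IsNullTriad_s9

variable {g : LinearMap.BilinForm R V} {k n m : V}

theorem m_ne_zero [Nontrivial R] (h : IsNullTriad_s9 g k n m) : m ≠ 0 := by
  rintro rfl
  simpa using h.apply_m_m

theorem eq_of_mem_span (h : IsNullTriad_s9 g k n m) (hg : g.IsSymm) {v : V}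
    (hv : v ∈ Submodule.span R {k, n, m}) :
    v = -g n v • k - g k v • n + g m v • m := by
  obtain ⟨a, b, d, rfl⟩ := Submodule.mem_span_triple.mp hv
  have hk : g k (a • k + b • n + d • m) = -b := by
    simp [h.apply_k_k, h.apply_k_n, h.apply_k_m]
  have hn : g n (a • k + b • n + d • m) = -a := by
    simp [hg.eq n k, h.apply_k_n, h.apply_n_n, h.apply_n_m]
  have hm : g m (a • k + b • n + d • m) = d := by
    simp [hg.eq m k, hg.eq m n, h.apply_k_m, h.apply_n_m, h.apply_m_m]
  rw [hk, hn, hm]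
  module

theorem segreOneZZbar_apply_m_left (h : IsNullTriad_s9 g k n m) (α β γ : R) (u : V) :
    segreOneZZbar g k n m α β γ m u = γ * g m u := by
  simp [segreOneZZbar_apply, h.apply_k_m, h.apply_n_m, h.apply_m_m]

theorem segreOneZZbar_apply_k_right (h : IsNullTriad_s9 g k n m) (hg : g.IsSymm) (α β γ : R)
    (v : V) : segreOneZZbar g k n m α β γ v k = α * g k v - β * g n v := by
  rw [segreOneZZbar_apply, hg.eq n k, hg.eq m k, h.apply_k_k, h.apply_k_n, h.apply_k_m]
  ring

theorem segreOneZZbar_apply_n_right (h : IsNullTriad_s9 g k n m) (hg : g.IsSymm) (α β γ : R)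
    (v : V) : segreOneZZbar g k n m α β γ v n = β * g k v + α * g n v := by
  rw [segreOneZZbar_apply, hg.eq m n, h.apply_k_n, h.apply_n_n, h.apply_n_m]
  ring

theorem isRelativeEigenvector_m [Nontrivial R] (h : IsNullTriad_s9 g k n m) (α β γ : R) :
    IsRelativeEigenvector (segreOneZZbar g k n m α β γ) g γ m :=
  ⟨h.m_ne_zero, h.segreOneZZbar_apply_m_left α β γ⟩

end IsNullTriad_s9

end NullTriad

section Eigendirections

variable {K V : Type*} [Field K] [AddCommGroup V] [Module K V]
  {g : LinearMap.BilinForm K V} {k n m : V}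

theorem IsRelativeEigenvector.apply_k_eq_zero_and_apply_n_eq_zero (hK : ¬IsSquare (-1 : K))
    (hg : g.IsSymm) (h : IsNullTriad_s9 g k n m) {α β γ c : K} (hβ : β ≠ 0) {v : V}
    (hv : IsRelativeEigenvector (segreOneZZbar g k n m α β γ) g c v) :
    g k v = 0 ∧ g n v = 0 := by
  have hvk : α * g k v - β * g n v = c * g k v := by
    rw [← h.segreOneZZbar_apply_k_right hg α β γ, hv.2, hg.eq]
  have hvn : β * g k v + α * g n v = c * g n v := by
    rw [← h.segreOneZZbar_apply_n_right hg α β γ, hv.2, hg.eq]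
  exact eq_zero_and_eq_zero_of_rotation_scaling_eigenvector hK hβ hvk hvn

theorem segre_type_1zzbar_unique_spacelike_eigendirection_general (hK : ¬IsSquare (-1 : K))
    (hg : g.IsSymm) (h : IsNullTriad_s9 g k n m) (α : K) {β : K} (hβ : β ≠ 0) (γ : K) :
    IsRelativeEigenvector (segreOneZZbar g k n m α β γ) g γ m ∧
      ∀ v ∈ Submodule.span K {k, n, m}, ∀ c : K,
        IsRelativeEigenvector (segreOneZZbar g k n m α β γ) g c v →
          ∃ s : K, s ≠ 0 ∧ v = s • m := by
  refine ⟨h.isRelativeEigenvector_m α β γ, fun v hspan c hv => ?_⟩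
  obtain ⟨hkv, hnv⟩ := hv.apply_k_eq_zero_and_apply_n_eq_zero hK hg h hβ
  have hvm : v = g m v • m := by simpa [hkv, hnv] using h.eq_of_mem_span hg hspan
  exact ⟨g m v, left_ne_zero_of_smul (hvm ▸ hv.1), hvm⟩

end Eigendirections

/-- The Segre type [1zz̄] canonical tensor (β ≠ 0) has exactly one real
eigendirection, the spacelike vector `m`, with eigenvalue `γ`. -/
theorem segre_type_1zzbar_unique_spacelike_eigendirection
    {V : Type*} [AddCommGroup V] [Module ℝ V]
    (g : LinearMap.BilinForm ℝ V) (hgsymm : ∀ u w : V, g u w = g w u)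
    (k n m : V)
    (hkn : g k n = -1) (hmm : g m m = 1)
    (hkk : g k k = 0) (hnn : g n n = 0) (hkm : g k m = 0) (hnm : g n m = 0)
    (hspan : Submodule.span ℝ {k, n, m} = ⊤)
    (α β γ : ℝ) (hβ : β ≠ 0)
    (T : LinearMap.BilinForm ℝ V)
    (hT : ∀ u w : V,
      T u w = -α * (g k u * g n w + g n u * g k w)
        - β * (g k u * g k w - g n u * g n w) + γ * (g m u * g m w)) :
    (∀ u : V, T m u = γ * g m u) ∧
    (∀ v : V, ∀ c : ℝ, v ≠ 0 → (∀ u : V, T v u = c * g v u) →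
      ∃ s : ℝ, s ≠ 0 ∧ v = s • m) := by
  obtain rfl : T = segreOneZZbar g k n m α β γ := LinearMap.ext₂ hT
  have hℝ : ¬IsSquare (-1 : ℝ) := fun h => by linarith [h.nonneg]
  obtain ⟨hm, hunique⟩ := segre_type_1zzbar_unique_spacelike_eigendirection_general hℝ ⟨hgsymm⟩
    (IsNullTriad_s9.mk hkn hmm hkk hnn hkm hnm) α hβ γ
  exact ⟨hm.2, fun v c hv hTv => hunique v (hspan ▸ Submodule.mem_top) c ⟨hv, hTv⟩⟩
end

section
/- Let V be a 3-dimensional real vector space with a symmetric bilinear form g, and let (k, n, m) be a null triad spanning V (g(k,n) = -1, g(m,m) = 1, g(k,k) = g(n,n) = g(k,m) = g(n,m) = 0). Let T be the Segre type [12] canonical form T(u,w) = -α·(g(k,u)g(n,w) + g(n,u)g(k,w)) + λ·g(k,u)g(k,w) + γ·g(m,u)g(m,w) with λ ≠ 0. Then: (a) k is an eigenvector of T relative to g with eigenvalue α; (b) m is an eigenvector of T relative to g with eigenvalue γ; (c) if moreover α ≠ γ, then every eigenvector of T relative to g is a nonzero scalar multiple of k or of m; in particular T has no timelike eigenvector (no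 eigenvector v with g(v,v) < 0). -/
/-!
Since `T` and `g` are symmetric, an eigenvector `v` with eigenvalue `c` satisfies
`T u v = c * g u v` for every `u` in the triad. As `T k = α • g k`, `T n = α • g n - lam • g k`
and `T m = γ • g m`, this amounts to

* `α * g k v = c * g k v`,
* `α * g n v - lam * g k v = c * g n v`,
* `γ * g m v = c * g m v`.

The first two give `lam * (g k v) ^ 2 = 0`, hence `g k v = 0`, so that `v` lies in the plane spanned
by `k` and `m`, on which `g` is positive semidefinite. Its coefficients `-g n v` and `g m v` belong
to the eigenvalues `α` and `γ` respectively, so if `α ≠ γ` one of them vanishes.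
-/

open LinearMap (BilinForm)

/-- A null triad `(k, n, m)` of a bilinear form `g`: two null vectors normalized by `g k n = -1`,
together with a unit vector orthogonal to both. Symmetry of `g` is not part of the definition, so
only one order of each mixed pair is recorded. -/
structure IsNullTriad_s10 {R V : Type*} [CommRing R] [AddCommGroup V] [Module R V]
    (g : BilinForm R V) (k n m : V) : Prop where
  apply_k_n : g k n = -1
  apply_m_m : g m m = 1
  apply_k_k : g k k = 0
  apply_n_n : g n n = 0
  apply_k_m : g k m = 0
  apply_n_m : g n m = 0

/-- The Segre type [12] canonical form with parameters `α`, `lam`, `γ` built from the functionals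
`g k`, `g n`, `g m`. The vectors are arbitrary here; the name is justified when they form a null
triad and `lam ≠ 0`. -/
def segreType12Form {R V : Type*} [CommRing R] [AddCommGroup V] [Module R V]
    (g : BilinForm R V) (k n m : V) (α lam γ : R) : BilinForm R V :=
  -α • (BilinForm.linMulLin (g k) (g n) + BilinForm.linMulLin (g n) (g k))
    + lam • BilinForm.linMulLin (g k) (g k) + γ • BilinForm.linMulLin (g m) (g m)

section

variable {R V : Type*} [CommRing R] [AddCommGroup V] [Module R V]
  {g : BilinForm R V} {k n m : V} {α lam γ : R}

theorem segreType12Form_apply (u w : V) :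
    segreType12Form g k n m α lam γ u w =
      -α * (g k u * g n w + g n u * g k w) + lam * (g k u * g k w) + γ * (g m u * g m w) :=
  rfl

theorem segreType12Form_isSymm : (segreType12Form g k n m α lam γ).IsSymm where
  eq u w := by
    simp only [segreType12Form_apply]
    ring

namespace IsNullTriad_s10

theorem apply_n_k (h : IsNullTriad_s10 g k n m) (hg : g.IsSymm) : g n k = -1 :=
  (hg.eq n k).trans h.apply_k_n

theorem apply_m_k (h : IsNullTriad_s10 g k n m) (hg : g.IsSymm) : g m k = 0 :=
  (hg.eq m k).trans h.apply_k_m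

theorem apply_m_n (h : IsNullTriad_s10 g k n m) (hg : g.IsSymm) : g m n = 0 :=
  (hg.eq m n).trans h.apply_n_m

theorem eq_linear_combination (h : IsNullTriad_s10 g k n m) (hg : g.IsSymm)
    (hspan : Submodule.span R {k, n, m} = ⊤) (v : V) :
    v = -g n v • k + -g k v • n + g m v • m := by
  have hv : v ∈ Submodule.span R {k, n, m} := hspan ▸ Submodule.mem_top
  obtain ⟨x, y, z, rfl⟩ := Submodule.mem_span_triple.mp hv
  simp [h.apply_k_n, h.apply_m_m, h.apply_k_k, h.apply_n_n, h.apply_k_m, h.apply_n_m,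
    h.apply_n_k hg, h.apply_m_k hg, h.apply_m_n hg]

theorem apply_self (h : IsNullTriad_s10 g k n m) (hg : g.IsSymm)
    (hspan : Submodule.span R {k, n, m} = ⊤) (v : V) :
    g v v = g m v ^ 2 - 2 * g k v * g n v := by
  calc
    g v v = g (-g n v • k + -g k v • n + g m v • m) v := by
      rw [← h.eq_linear_combination hg hspan v]
    _ = g m v ^ 2 - 2 * g k v * g n v := by
      simp only [map_add, map_smul, LinearMap.add_apply, LinearMap.smul_apply, smul_eq_mul]
      ring

theorem segreType12Form_apply_k (h : IsNullTriad_s10 g k n m) (hg : g.IsSymm) (u : V) :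
    segreType12Form g k n m α lam γ k u = α * g k u := by
  simp [segreType12Form_apply, h.apply_k_k, h.apply_n_k hg, h.apply_m_k hg]

theorem segreType12Form_apply_n (h : IsNullTriad_s10 g k n m) (hg : g.IsSymm) (u : V) :
    segreType12Form g k n m α lam γ n u = α * g n u - lam * g k u := by
  simp [segreType12Form_apply, h.apply_k_n, h.apply_n_n, h.apply_m_n hg, sub_eq_add_neg]

theorem segreType12Form_apply_m (h : IsNullTriad_s10 g k n m) (u : V) :
    segreType12Form g k n m α lam γ m u = γ * g m u := by
  simp [segreType12Form_apply, h.apply_k_m, h.apply_n_m, h.apply_m_m]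

end IsNullTriad_s10

theorem apply_eigenvector_right_of_isSymm {T : BilinForm R V} (hT : T.IsSymm) (hg : g.IsSymm)
    {v : V} {c : R} (hv : ∀ u, T v u = c * g v u) (u : V) : T u v = c * g u v :=
  (hT.eq u v).trans <| (hv u).trans <| congrArg (c * ·) (hg.eq v u)

namespace IsNullTriad_s10

variable [NoZeroDivisors R] {v : V} {c : R}

theorem apply_k_eq_zero_of_eigenvector (h : IsNullTriad_s10 g k n m) (hg : g.IsSymm) (hlam : lam ≠ 0)
    (hv : ∀ u, segreType12Form g k n m α lam γ v u = c * g v u) : g k v = 0 := by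
  have hv' := apply_eigenvector_right_of_isSymm segreType12Form_isSymm hg hv
  have hk : α * g k v = c * g k v := (h.segreType12Form_apply_k hg v).symm.trans (hv' k)
  have hn : α * g n v - lam * g k v = c * g n v :=
    (h.segreType12Form_apply_n hg v).symm.trans (hv' n)
  have hsq : lam * g k v ^ 2 = 0 := by linear_combination g n v * hk - g k v * hn
  exact pow_eq_zero_iff two_ne_zero |>.mp <| (mul_eq_zero.mp hsq).resolve_left hlam

theorem apply_n_eq_zero_or_apply_m_eq_zero_of_eigenvector (h : IsNullTriad_s10 g k n m)
    (hg : g.IsSymm) (hlam : lam ≠ 0) (hαγ : α ≠ γ)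
    (hv : ∀ u, segreType12Form g k n m α lam γ v u = c * g v u) : g n v = 0 ∨ g m v = 0 := by
  have hv' := apply_eigenvector_right_of_isSymm segreType12Form_isSymm hg hv
  have hkv : g k v = 0 := h.apply_k_eq_zero_of_eigenvector hg hlam hv
  have hn : α * g n v = c * g n v := by
    simpa [hkv] using (h.segreType12Form_apply_n hg v).symm.trans (hv' n)
  have hm : γ * g m v = c * g m v := (h.segreType12Form_apply_m v).symm.trans (hv' m)
  have hprod : (α - γ) * (g n v * g m v) = 0 := by
    linear_combination g m v * hn - g n v * hm
  exact mul_eq_zero.mp <| (mul_eq_zero.mp hprod).resolve_left (sub_ne_zero.mpr hαγ)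

theorem eigenvector_eq_smul_k_or_smul_m (h : IsNullTriad_s10 g k n m) (hg : g.IsSymm)
    (hspan : Submodule.span R {k, n, m} = ⊤) (hlam : lam ≠ 0) (hαγ : α ≠ γ) (hv_ne : v ≠ 0)
    (hv : ∀ u, segreType12Form g k n m α lam γ v u = c * g v u) :
    (∃ s : R, s ≠ 0 ∧ v = s • k) ∨ ∃ s : R, s ≠ 0 ∧ v = s • m := by
  have hkv : g k v = 0 := h.apply_k_eq_zero_of_eigenvector hg hlam hv
  have hv_eq : v = -g n v • k + g m v • m := by
    simpa [hkv] using h.eq_linear_combination hg hspan v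
  have coeff_ne_zero {s : R} {w : V} (hw : v = s • w) : s ≠ 0 := fun hs ↦
    hv_ne <| by rw [hw, hs, zero_smul]
  rcases h.apply_n_eq_zero_or_apply_m_eq_zero_of_eigenvector hg hlam hαγ hv with hnv | hmv
  · have hvm : v = g m v • m := by simpa [hnv] using hv_eq
    exact .inr ⟨g m v, coeff_ne_zero hvm, hvm⟩
  · have hvk : v = -g n v • k := by simpa [hmv] using hv_eq
    exact .inl ⟨-g n v, coeff_ne_zero hvk, hvk⟩

theorem apply_self_of_eigenvector (h : IsNullTriad_s10 g k n m) (hg : g.IsSymm)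
    (hspan : Submodule.span R {k, n, m} = ⊤) (hlam : lam ≠ 0)
    (hv : ∀ u, segreType12Form g k n m α lam γ v u = c * g v u) : g v v = g m v ^ 2 := by
  simp [h.apply_self hg hspan v, h.apply_k_eq_zero_of_eigenvector hg hlam hv]

end IsNullTriad_s10

end

theorem segre_type_12_eigenvectors_general
    {R V : Type*} [CommRing R] [LinearOrder R] [IsStrictOrderedRing R]
    [AddCommGroup V] [Module R V] {g : BilinForm R V} (hg : g.IsSymm)
    {k n m : V} (h : IsNullTriad_s10 g k n m) (hspan : Submodule.span R {k, n, m} = ⊤)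
    {α lam γ : R} (hlam : lam ≠ 0) {T : BilinForm R V}
    (hT : ∀ u w : V,
      T u w = -α * (g k u * g n w + g n u * g k w)
        + lam * (g k u * g k w) + γ * (g m u * g m w)) :
    (∀ u : V, T k u = α * g k u) ∧
    (∀ u : V, T m u = γ * g m u) ∧
    (α ≠ γ → ∀ v : V, ∀ c : R, v ≠ 0 → (∀ u : V, T v u = c * g v u) →
      (∃ s : R, s ≠ 0 ∧ v = s • k) ∨ (∃ s : R, s ≠ 0 ∧ v = s • m)) ∧
    (∀ v : V, ∀ c : R, (∀ u : V, T v u = c * g v u) → 0 ≤ g v v) := by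
  obtain rfl : T = segreType12Form g k n m α lam γ := LinearMap.ext₂ hT
  refine ⟨h.segreType12Form_apply_k hg, h.segreType12Form_apply_m,
    fun hαγ v c hv_ne hv ↦ h.eigenvector_eq_smul_k_or_smul_m hg hspan hlam hαγ hv_ne hv,
    fun v c hv ↦ ?_⟩
  rw [h.apply_self_of_eigenvector hg hspan hlam hv]
  exact sq_nonneg (g m v)

/-- Eigenvectors of the Segre type [12] canonical tensor: the null vector `k`
(eigenvalue α) and the spacelike vector `m` (eigenvalue γ); when α ≠ γ these are
the only eigendirections, so in particular there is no timelike eigenvector. -/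
theorem segre_type_12_eigenvectors
    {V : Type*} [AddCommGroup V] [Module ℝ V]
    (g : LinearMap.BilinForm ℝ V) (hgsymm : ∀ u w : V, g u w = g w u)
    (k n m : V)
    (hkn : g k n = -1) (hmm : g m m = 1)
    (hkk : g k k = 0) (hnn : g n n = 0) (hkm : g k m = 0) (hnm : g n m = 0)
    (hspan : Submodule.span ℝ {k, n, m} = ⊤)
    (α lam γ : ℝ) (hlam : lam ≠ 0)
    (T : LinearMap.BilinForm ℝ V)
    (hT : ∀ u w : V,
      T u w = -α * (g k u * g n w + g n u * g k w)
        + lam * (g k u * g k w) + γ * (g m u * g m w)) :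
    (∀ u : V, T k u = α * g k u) ∧
    (∀ u : V, T m u = γ * g m u) ∧
    (α ≠ γ →
      (∀ v : V, ∀ c : ℝ, v ≠ 0 → (∀ u : V, T v u = c * g v u) →
        (∃ s : ℝ, s ≠ 0 ∧ v = s • k) ∨ (∃ s : ℝ, s ≠ 0 ∧ v = s • m)) ∧
      ¬ ∃ v : V, ∃ c : ℝ, v ≠ 0 ∧ g v v < 0 ∧ ∀ u : V, T v u = c * g v u) := by
  obtain ⟨hk, hm, hcases, hself⟩ := segre_type_12_eigenvectors_general ⟨hgsymm⟩
    ⟨hkn, hmm, hkk, hnn, hkm, hnm⟩ hspan hlam hT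
  exact ⟨hk, hm, fun hαγ ↦ ⟨hcases hαγ, fun ⟨v, c, _, hneg, hv⟩ ↦ (hself v c hv).not_gt hneg⟩⟩
end

section
/- Let m > 0 and ω ∈ ℝ satisfy m² ≥ 4ω². Define D(r) = sinh(m·r)/m and H(r) = (4ω/m²)·(sinh(m·r/2))². Then for every r ∈ ℝ one has D(r)² - H(r)² ≥ 0. (For m² ≥ 4ω² the homogeneous Gödel-type spacetime has no closed timelike circles t, r = const: the metric coefficient g_φφ = D² - H² is everywhere nonnegative.) -/
/-!
Since `2 sinh² x = tanh x · sinh 2x`, the two metric functions are related by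
`H(r) = (2ω/m) tanh(mr/2) D(r)`. As `|tanh| ≤ 1`, the condition `|2ω| ≤ |m|` forces `|H| ≤ |D|`.
-/

theorem two_mul_sinh_sq_eq_tanh_mul_sinh_two_mul (x : ℝ) :
    2 * Real.sinh x ^ 2 = Real.tanh x * Real.sinh (2 * x) := by
  rw [Real.sinh_two_mul, Real.tanh_eq_sinh_div_cosh]
  field_simp

/-- The function `D` in the Gödel-type metric `-[dt + H dφ]² + D² dφ² + dr²`: the circumference
radius of the circle of radius `r` in the hyperbolic plane of curvature `-m²`. At `m = 0` it takes
the junk value `0` instead of the limit `r`. -/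
noncomputable def godelD (m r : ℝ) : ℝ :=
  Real.sinh (m * r) / m

/-- The function `H` in the Gödel-type metric `-[dt + H dφ]² + D² dφ² + dr²`, which couples `t`
to `φ` and so encodes the rotation `ω`. -/
noncomputable def godelH (m ω r : ℝ) : ℝ :=
  (4 * ω / m ^ 2) * Real.sinh (m * r / 2) ^ 2

theorem godelH_eq_mul_tanh_mul_godelD (m ω r : ℝ) :
    godelH m ω r = 2 * ω / m * Real.tanh (m * r / 2) * godelD m r := by
  calc
    godelH m ω r = 2 * ω / m ^ 2 * (2 * Real.sinh (m * r / 2) ^ 2) := by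
      rw [godelH]
      ring
    _ = 2 * ω / m ^ 2 * (Real.tanh (m * r / 2) * Real.sinh (m * r)) := by
      rw [two_mul_sinh_sq_eq_tanh_mul_sinh_two_mul, mul_div_cancel₀ (m * r) two_ne_zero]
    _ = 2 * ω / m * Real.tanh (m * r / 2) * godelD m r := by
      rw [godelD]
      ring

theorem abs_godelH_le_abs_godelD {m ω : ℝ} (h : |2 * ω| ≤ |m|) (r : ℝ) :
    |godelH m ω r| ≤ |godelD m r| := by
  have hω : |2 * ω / m| ≤ 1 := by
    rw [abs_div]
    exact div_le_one_of_le₀ h (abs_nonneg m)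
  have htanh : |Real.tanh (m * r / 2)| ≤ 1 := (Real.abs_tanh_lt_one _).le
  rw [godelH_eq_mul_tanh_mul_godelD, abs_mul, abs_mul]
  exact mul_le_of_le_one_left (abs_nonneg _) (mul_le_one₀ hω (abs_nonneg _) htanh)

/-- For `m² ≥ 4ω²` the homogeneous Gödel-type spacetime has no closed timelike
circles `t, r = const`: the metric coefficient `g_φφ = D² - H²` is everywhere
nonnegative. -/
theorem godel_type_causal_when_m_sq_ge_four_omega_sq
    (m ω : ℝ) (hm : 0 < m) (h : m ^ 2 ≥ 4 * ω ^ 2) :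
    ∀ r : ℝ,
      (Real.sinh (m * r) / m) ^ 2
        - ((4 * ω / m ^ 2) * (Real.sinh (m * r / 2)) ^ 2) ^ 2 ≥ 0 := by
  intro r
  have hωm : |2 * ω| ≤ |m| := sq_le_sq.mp (by linarith [mul_pow 2 ω 2])
  exact sub_nonneg.mpr (sq_le_sq.mpr (abs_godelH_le_abs_godelD hωm r))
end

section
/- Let m > 0 and ω ∈ ℝ satisfy 0 < m² < 4ω². Define D(r) = sinh(m·r)/m and H(r) = (4ω/m²)·(sinh(m·r/2))². Then there exists r > 0 such that D(r)² - H(r)² < 0. (For 0 < m² < 4ω², in particular for the Gödel spacetime where m² = 2ω², there is a non-causal region: the metric coefficient g_φφ = D² - H² becomes negative, producing closed timelike curves.) -/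
/-!
With `s = sinh (m r / 2)`, the identity `sinh (m r) = 2 s cosh (m r / 2)` gives
`D² - H² = (4 s² / m⁴) (m² - (4ω² - m²) s²)`. Since `4ω² - m² > 0` and `s` increases to infinity
with `r`, the last factor becomes negative past the radius where `s = m / √(4ω² - m²)`.
-/

namespace GodelType

/-- The metric function `D(r) = sinh(mr) / m` of a homogeneous Gödel-type metric. -/
noncomputable def D (m r : ℝ) : ℝ := Real.sinh (m * r) / m

/-- The metric function `H(r) = (4ω / m²) sinh²(mr / 2)` of a homogeneous Gödel-type metric. -/
noncomputable def H (m ω r : ℝ) : ℝ := 4 * ω / m ^ 2 * Real.sinh (m * r / 2) ^ 2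

/-- The metric coefficient `g_φφ = D² - H²`; the circle `t, r = const` is a closed timelike curve
exactly when it is negative. -/
noncomputable def gPhiPhi (m ω r : ℝ) : ℝ := D m r ^ 2 - H m ω r ^ 2

/-- The radius `r_c` at which `g_φφ` changes sign, determined by
`sinh(m r_c / 2) = m / √(4ω² - m²)`. Meaningful only for `0 < m² < 4ω²`. -/
noncomputable def criticalRadius (m ω : ℝ) : ℝ :=
  2 * Real.arsinh (m / √(4 * ω ^ 2 - m ^ 2)) / m

variable {m ω r : ℝ}

lemma D_eq_sinh_mul_cosh (m r : ℝ) :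
    D m r = 2 * Real.sinh (m * r / 2) * Real.cosh (m * r / 2) / m := by
  rw [D, ← Real.sinh_two_mul, mul_div_cancel₀ (m * r) two_ne_zero]

lemma gPhiPhi_eq (hm : m ≠ 0) (ω r : ℝ) :
    gPhiPhi m ω r = 4 * Real.sinh (m * r / 2) ^ 2 / m ^ 4 *
      (m ^ 2 - (4 * ω ^ 2 - m ^ 2) * Real.sinh (m * r / 2) ^ 2) := by
  rw [gPhiPhi, D_eq_sinh_mul_cosh, H, div_pow, mul_pow, Real.cosh_sq]
  field_simp
  ring

lemma gPhiPhi_neg_iff (hm : m ≠ 0) (hr : r ≠ 0) :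
    gPhiPhi m ω r < 0 ↔ m ^ 2 < (4 * ω ^ 2 - m ^ 2) * Real.sinh (m * r / 2) ^ 2 := by
  have hsinh : Real.sinh (m * r / 2) ≠ 0 :=
    Real.sinh_ne_zero.mpr (div_ne_zero (mul_ne_zero hm hr) two_ne_zero)
  have hfactor : 0 < 4 * Real.sinh (m * r / 2) ^ 2 / m ^ 4 :=
    div_pos (mul_pos four_pos (sq_pos_iff.mpr hsinh)) (by positivity)
  rw [gPhiPhi_eq hm, ← sub_neg (a := m ^ 2)]
  exact smul_neg_iff_of_pos_left hfactor

lemma criticalRadius_pos (hm : 0 < m) (hω : m ^ 2 < 4 * ω ^ 2) : 0 < criticalRadius m ω := by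
  have hsqrt : 0 < √(4 * ω ^ 2 - m ^ 2) := Real.sqrt_pos.mpr (sub_pos.mpr hω)
  exact div_pos (mul_pos two_pos (Real.arsinh_pos_iff.mpr (div_pos hm hsqrt))) hm

lemma criticalRadius_lt_iff (hm : 0 < m) :
    criticalRadius m ω < r ↔ m / √(4 * ω ^ 2 - m ^ 2) < Real.sinh (m * r / 2) := by
  rw [criticalRadius, div_lt_iff₀' hm, ← lt_div_iff₀' two_pos, ← Real.sinh_lt_sinh,
    Real.sinh_arsinh]

theorem gPhiPhi_neg_iff_criticalRadius_lt (hm : 0 < m) (hω : m ^ 2 < 4 * ω ^ 2) (hr : 0 < r) :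
    gPhiPhi m ω r < 0 ↔ criticalRadius m ω < r := by
  have hδ : 0 < 4 * ω ^ 2 - m ^ 2 := sub_pos.mpr hω
  have hsqrt : 0 < √(4 * ω ^ 2 - m ^ 2) := Real.sqrt_pos.mpr hδ
  have hsinh : 0 < Real.sinh (m * r / 2) := Real.sinh_pos_iff.mpr (by positivity)
  calc
    gPhiPhi m ω r < 0
    _ ↔ m ^ 2 < (√(4 * ω ^ 2 - m ^ 2) * Real.sinh (m * r / 2)) ^ 2 := by
      rw [gPhiPhi_neg_iff hm.ne' hr.ne', mul_pow, Real.sq_sqrt hδ.le]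
    _ ↔ m < √(4 * ω ^ 2 - m ^ 2) * Real.sinh (m * r / 2) :=
      sq_lt_sq₀ hm.le (mul_pos hsqrt hsinh).le
    _ ↔ m / √(4 * ω ^ 2 - m ^ 2) < Real.sinh (m * r / 2) :=
      (div_lt_iff₀' hsqrt).symm
    _ ↔ criticalRadius m ω < r := (criticalRadius_lt_iff hm).symm

end GodelType

/-- For `0 < m² < 4ω²` the homogeneous Gödel-type spacetime has a non-causal
region: the metric coefficient `g_φφ = D² - H²` becomes negative. -/
theorem godel_type_noncausal_region_when_m_sq_lt_four_omega_sq
    (m ω : ℝ) (hm : 0 < m) (h : m ^ 2 < 4 * ω ^ 2) :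
    ∃ r : ℝ, 0 < r ∧
      (Real.sinh (m * r) / m) ^ 2
        - ((4 * ω / m ^ 2) * (Real.sinh (m * r / 2)) ^ 2) ^ 2 < 0 := by
  obtain ⟨r, hr⟩ := exists_gt (GodelType.criticalRadius m ω)
  have hr_pos : 0 < r := (GodelType.criticalRadius_pos hm h).trans hr
  exact ⟨r, hr_pos, (GodelType.gPhiPhi_neg_iff_criticalRadius_lt hm h hr_pos).mpr hr⟩
end
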